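/- arXiv:1411.2919 — 2 statements merged into one kernel-verified Lean document; each statement's English description precedes it below -/
import Mathlib

section
/- Consider the two-armed structured bandit with Θ = ℝ, μ_1(θ) = θ and μ_2(θ) = −θ, where rewards are normally distributed with unit variance. Then for every θ > 0 and every bandit algorithm, for all sufficiently large n, max{E_{−θ} R_n(−θ), E_θ R_n(θ)} ≥ 1/(8θ). -/
open MeasureTheory ProbabilityTheory

namespace TwoArmedBandit

/-- A (deterministic, history-dependent) algorithm for a two-armed bandit: `choose t h` is the
arm played at round `t + 1` given the vector `h` of rewards observed in the first `t` rounds. -/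
structure Alg where
  choose : (t : ℕ) → (Fin t → ℝ) → Fin 2
  measurable_choose : ∀ t, Measurable (choose t)

/-- The canonical trajectory space: `ω t` is the reward received at round `t + 1`. -/
abbrev Traj : Type := ℕ → ℝ

/-- The arm played at round `t ∈ {1, 2, …}` on trajectory `ω`. -/
def armAt (alg : Alg) (t : ℕ) (ω : Traj) : Fin 2 :=
  alg.choose (t - 1) fun i => ω i.val

/-- `IsEnv μ alg P` asserts that for every `θ`, `P θ` is the law of the reward sequence
obtained when the algorithm `alg` interacts with the two-armed bandit environment in which arm
`i` yields independent `N(μ i θ, 1)`-distributed rewards: each `P θ` is a probability measure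
and, conditionally on the first `t` rewards, the reward at round `t + 1` is Gaussian with unit
variance and mean `μ i θ` where `i` is the arm chosen by the algorithm at round `t + 1`. -/
def IsEnv {Θ : Type*} (μ : Fin 2 → Θ → ℝ) (alg : Alg) (P : Θ → Measure Traj) : Prop :=
  (∀ θ, IsProbabilityMeasure (P θ)) ∧
  ∀ θ (t : ℕ) (f : (Fin (t + 1) → ℝ) → ℝ), Measurable f → (∃ C, ∀ x, |f x| ≤ C) →
    ∫ ω, f (fun i => ω i.val) ∂(P θ) =
      ∫ ω, ∫ x, f (Fin.snoc (fun i : Fin t => ω i.val) x)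
        ∂(gaussianReal (μ (alg.choose t fun i => ω i.val) θ) 1) ∂(P θ)

/-- The cumulative regret over the first `n` rounds on trajectory `ω`, under parameter `θ`. -/
noncomputable def regret {Θ : Type*} (μ : Fin 2 → Θ → ℝ) (alg : Alg) (θ : Θ) (n : ℕ)
    (ω : Traj) : ℝ :=
  ∑ t ∈ Finset.Icc 1 n, (max (μ 0 θ) (μ 1 θ) - μ (armAt alg t ω) θ)

/-- The expected cumulative regret `E_θ R_n(θ)`. -/
noncomputable def expRegret {Θ : Type*} (μ : Fin 2 → Θ → ℝ) (alg : Alg)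
    (P : Θ → Measure Traj) (θ : Θ) (n : ℕ) : ℝ :=
  ∫ ω, regret μ alg θ n ω ∂(P θ)

/-!
This is Le Cam's two-point method. Consider two environments in which arm 1 loses at least `δ` per
round in one of them, arm 2 loses at least `δ` in the other, and the means of each arm differ by at
most `Δ`. The product of the Gaussian densities with means `a` and `b` is `exp (-(a - b) ^ 2 / 4)`
times the squared density with mean `(a + b) / 2`. Hence the geometric mean of the densities of the
first `t` rewards in the two environments is at least `exp (-Δ ^ 2 / 8) ^ t` times a probability
density: that of the rewards in the environment with averaged means. By the Cauchy-Schwarz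
inequality, the probabilities of playing the losing arm after `t` rewards add up to at least
`exp (-Δ ^ 2 / 4) ^ t / 2`. Summed over `t`, this bounds the sum of the two expected regrets below
by a quantity whose limit is at least `2 * δ / Δ ^ 2`. Here `δ = Δ = 2 * θ`, and the maximum of
the two regrets eventually exceeds every number below `1 / (2 * θ)`.
-/

open scoped ENNReal

section TwoPointMethod

variable {α : Type*} [MeasurableSpace α] {ρ : Measure α} {p q r : α → ℝ≥0∞}

theorem sq_lintegral_le_lintegral_mul_lintegral (hp : AEMeasurable p ρ) (hq : AEMeasurable q ρ)
    (h : ∀ x, r x ^ 2 ≤ p x * q x) :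
    (∫⁻ x, r x ∂ρ) ^ 2 ≤ (∫⁻ x, p x ∂ρ) * ∫⁻ x, q x ∂ρ := by
  have half_sq (y : ℝ≥0∞) : (y ^ (1 / 2 : ℝ)) ^ 2 = y := by
    rw [← ENNReal.rpow_natCast, ← ENNReal.rpow_mul]
    norm_num
  have le_sqrt (x : α) : r x ≤ p x ^ (1 / 2 : ℝ) * q x ^ (1 / 2 : ℝ) := by
    refine (ENNReal.pow_le_pow_left_iff two_ne_zero).1 ?_
    simpa only [mul_pow, half_sq] using h x
  calc (∫⁻ x, r x ∂ρ) ^ 2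
      ≤ (∫⁻ x, p x ^ (1 / 2 : ℝ) * q x ^ (1 / 2 : ℝ) ∂ρ) ^ 2 := by
        gcongr with x
        exact le_sqrt x
    _ ≤ ((∫⁻ x, p x ∂ρ) ^ (1 / 2 : ℝ) * (∫⁻ x, q x ∂ρ) ^ (1 / 2 : ℝ)) ^ 2 := by
        gcongr
        exact ENNReal.lintegral_mul_norm_pow_le hp hq (by norm_num) (by norm_num) (by norm_num)
    _ = (∫⁻ x, p x ∂ρ) * ∫⁻ x, q x ∂ρ := by rw [mul_pow, half_sq, half_sq]

theorem sq_lintegral_le_two_mul_withDensity_add_withDensity_compl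
    [IsProbabilityMeasure (ρ.withDensity p)] [IsProbabilityMeasure (ρ.withDensity q)]
    (hp : Measurable p) (hq : Measurable q) (h : ∀ x, r x ^ 2 ≤ p x * q x)
    {A : Set α} (hA : MeasurableSet A) :
    (∫⁻ x, r x ∂ρ) ^ 2 ≤ 2 * (ρ.withDensity p A + ρ.withDensity q Aᶜ) := by
  classical
  -- Cauchy-Schwarz for the densities exchanged on `Aᶜ`, whose product is still `p * q`.
  have cauchy_schwarz : (∫⁻ x, r x ∂ρ) ^ 2 ≤
      (∫⁻ x, A.piecewise p q x ∂ρ) * ∫⁻ x, A.piecewise q p x ∂ρ := by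
    refine sq_lintegral_le_lintegral_mul_lintegral (hp.piecewise hA hq).aemeasurable
      (hq.piecewise hA hp).aemeasurable fun x => ?_
    by_cases hx : x ∈ A
    · simpa [hx] using h x
    · simpa [hx, mul_comm] using h x
  have lintegral_swap (f g : α → ℝ≥0∞) : ∫⁻ x, A.piecewise f g x ∂ρ =
      ρ.withDensity f A + ρ.withDensity g Aᶜ := by
    rw [lintegral_piecewise hA, withDensity_apply _ hA, withDensity_apply _ hA.compl]
  rw [lintegral_swap, lintegral_swap] at cauchy_schwarz
  calc (∫⁻ x, r x ∂ρ) ^ 2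
      ≤ (ρ.withDensity p A + ρ.withDensity q Aᶜ) *
          (ρ.withDensity q A + ρ.withDensity p Aᶜ) := cauchy_schwarz
    _ ≤ (ρ.withDensity p A + ρ.withDensity q Aᶜ) * (1 + 1) := by gcongr <;> exact prob_le_one
    _ = 2 * (ρ.withDensity p A + ρ.withDensity q Aᶜ) := by rw [one_add_one_eq_two, mul_comm]

end TwoPointMethod

theorem gaussianPDFReal_mul_gaussianPDFReal (a b : ℝ) (v : NNReal) (x : ℝ) :
    gaussianPDFReal a v x * gaussianPDFReal b v x =
      Real.exp (-(a - b) ^ 2 / (4 * v)) * gaussianPDFReal ((a + b) / 2) v x ^ 2 := by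
  have exponents : -(x - a) ^ 2 / (2 * v) + -(x - b) ^ 2 / (2 * v) =
      -(a - b) ^ 2 / (4 * v) + 2 * (-(x - (a + b) / 2) ^ 2 / (2 * v)) := by
    rcases eq_or_ne (v : ℝ) 0 with hv | hv
    · simp [hv]
    · field
  simp only [gaussianPDFReal, mul_pow, ← Real.exp_nat_mul]
  rw [mul_mul_mul_comm, ← Real.exp_add, exponents, Real.exp_add]
  push_cast
  ring

theorem sq_ofReal_mul_gaussianPDF_midpoint_le {a b Δ : ℝ} (h : |a - b| ≤ Δ) (v : NNReal)
    (x : ℝ) :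
    (ENNReal.ofReal (Real.exp (-Δ ^ 2 / (8 * v))) * gaussianPDF ((a + b) / 2) v x) ^ 2 ≤
      gaussianPDF a v x * gaussianPDF b v x := by
  have exp_sq : Real.exp (-Δ ^ 2 / (8 * v)) ^ 2 = Real.exp (-Δ ^ 2 / (4 * v)) := by
    rw [← Real.exp_nat_mul]
    ring_nf
  simp only [gaussianPDF]
  rw [← ENNReal.ofReal_mul (by positivity), ← ENNReal.ofReal_mul (gaussianPDFReal_nonneg _ _ _),
    ← ENNReal.ofReal_pow (mul_nonneg (by positivity) (gaussianPDFReal_nonneg _ _ _)),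
    gaussianPDFReal_mul_gaussianPDFReal, mul_pow, exp_sq]
  gcongr ENNReal.ofReal (Real.exp (-?_ / _) * _)
  exact sq_le_sq.2 (h.trans (le_abs_self Δ))

theorem measurable_snoc {α : Type*} [MeasurableSpace α] (n : ℕ) :
    Measurable fun z : (Fin n → α) × α => (Fin.snoc z.1 z.2 : Fin (n + 1) → α) := by
  refine measurable_pi_iff.2 (Fin.lastCases ?_ fun i => ?_)
  · simpa only [Fin.snoc_last] using measurable_snd
  · simpa only [Fin.snoc_castSucc] using measurable_fst.eval

theorem lintegral_fin_succ_eq_lintegral_snoc {α : Type*} [MeasureSpace α]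
    [SigmaFinite (volume : Measure α)] {n : ℕ} {f : (Fin (n + 1) → α) → ℝ≥0∞}
    (hf : Measurable f) : ∫⁻ y, f y = ∫⁻ y : Fin n → α, ∫⁻ x, f (Fin.snoc y x) := by
  rw [← (volume_preserving_piFinSuccAbove (fun _ => α) (Fin.last n)).symm.lintegral_comp hf,
    Measure.volume_eq_prod, lintegral_prod_symm]
  · simp [MeasurableEquiv.piFinSuccAbove, Fin.insertNthEquiv, Fin.insertNth_last']
  · exact (hf.comp (MeasurableEquiv.measurable _)).aemeasurable

namespace Alg

variable (alg : Alg) (a : Fin 2 → ℝ) (t : ℕ)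

/-- The law of the next reward given the first `t` rewards when arm `i` yields unit-variance
Gaussian rewards with mean `a i`: one step of the interaction with the environment. -/
noncomputable def rewardKernel : Kernel (Fin t → ℝ) ℝ :=
  (Kernel.ofFunOfCountable fun i => gaussianReal (a i) 1).comap (alg.choose t)
    (alg.measurable_choose t)

instance : IsMarkovKernel (alg.rewardKernel a t) where
  isProbabilityMeasure h := by
    change IsProbabilityMeasure (gaussianReal (a (alg.choose t h)) 1)
    infer_instance

/-- The Lebesgue density of the first `t` rewards when arm `i` has mean `a i`, through which the
laws of the rewards in different environments are compared. -/
noncomputable def historyDensity : (t : ℕ) → (Fin t → ℝ) → ℝ≥0∞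
  | 0, _ => 1
  | t + 1, h => historyDensity t (Fin.init h) *
      gaussianPDF (a (alg.choose t (Fin.init h))) 1 (h (Fin.last t))

theorem historyDensity_snoc (h : Fin t → ℝ) (x : ℝ) :
    alg.historyDensity a (t + 1) (Fin.snoc h x) =
      alg.historyDensity a t h * gaussianPDF (a (alg.choose t h)) 1 x := by
  simp [historyDensity]

theorem measurable_historyDensity : ∀ t, Measurable (alg.historyDensity a t)
  | 0 => measurable_const
  | t + 1 => by
    have init_meas : Measurable (Fin.init : (Fin (t + 1) → ℝ) → Fin t → ℝ) := by
      unfold Fin.init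
      fun_prop
    have mean_meas : Measurable fun h => a (alg.choose t h) :=
      (measurable_of_countable a).comp (alg.measurable_choose t)
    have pdf_meas := measurable_uncurry_gaussianPDF.comp ((mean_meas.comp init_meas).prodMk
      ((measurable_const (a := (1 : NNReal))).prodMk (measurable_pi_apply (Fin.last t))))
    exact ((measurable_historyDensity t).comp init_meas).mul pdf_meas

/-- The law of the first `t` rewards when arm `i` has mean `a i`, defined by its density; the
description by successive conditional laws is `historyMeasure_succ`. -/
noncomputable def historyMeasure : Measure (Fin t → ℝ) :=
  volume.withDensity (alg.historyDensity a t)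

instance : SFinite (alg.historyMeasure a t) := by
  unfold historyMeasure
  infer_instance

theorem historyMeasure_zero : alg.historyMeasure a 0 = Measure.dirac Fin.elim0 := by
  rw [historyMeasure, show alg.historyDensity a 0 = 1 from rfl, withDensity_one,
    volume_pi, Measure.pi_of_empty _ Fin.elim0]

theorem historyMeasure_succ : alg.historyMeasure a (t + 1) =
    (alg.historyMeasure a t ⊗ₘ alg.rewardKernel a t).map fun z => Fin.snoc z.1 z.2 := by
  refine Measure.ext_of_lintegral _ fun f hf => ?_
  have f_snoc_meas : Measurable fun z : (Fin t → ℝ) × ℝ => f (Fin.snoc z.1 z.2) :=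
    hf.comp (measurable_snoc t)
  have density_meas := alg.measurable_historyDensity a
  have lintegral_reward (h : Fin t → ℝ) : ∫⁻ x, f (Fin.snoc h x) ∂alg.rewardKernel a t h =
      ∫⁻ x, gaussianPDF (a (alg.choose t h)) 1 x * f (Fin.snoc h x) := by
    change ∫⁻ x, _ ∂gaussianReal (a (alg.choose t h)) 1 = _
    rw [gaussianReal_of_var_ne_zero _ one_ne_zero]
    exact lintegral_withDensity_eq_lintegral_mul _ (measurable_gaussianPDF _ _)
      (f_snoc_meas.comp measurable_prodMk_left)
  calc ∫⁻ h, f h ∂alg.historyMeasure a (t + 1)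
      = ∫⁻ h, alg.historyDensity a (t + 1) h * f h :=
        lintegral_withDensity_eq_lintegral_mul _ (density_meas _) hf
    _ = ∫⁻ h : Fin t → ℝ, ∫⁻ x,
          alg.historyDensity a (t + 1) (Fin.snoc h x) * f (Fin.snoc h x) :=
        lintegral_fin_succ_eq_lintegral_snoc ((density_meas _).mul hf)
    _ = ∫⁻ h, alg.historyDensity a t h * ∫⁻ x, f (Fin.snoc h x) ∂alg.rewardKernel a t h := by
        refine lintegral_congr fun h => ?_
        simp only [historyDensity_snoc, mul_assoc, lintegral_reward]
        exact lintegral_const_mul _ ((measurable_gaussianPDF _ _).mul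
          (f_snoc_meas.comp measurable_prodMk_left))
    _ = ∫⁻ h, ∫⁻ x, f (Fin.snoc h x) ∂alg.rewardKernel a t h ∂alg.historyMeasure a t :=
        (lintegral_withDensity_eq_lintegral_mul _ (density_meas _)
          f_snoc_meas.lintegral_kernel_prod_right').symm
    _ = ∫⁻ h, f h ∂(alg.historyMeasure a t ⊗ₘ alg.rewardKernel a t).map
          fun z => Fin.snoc z.1 z.2 := by
        rw [lintegral_map hf (measurable_snoc t), Measure.lintegral_compProd f_snoc_meas]

instance isProbabilityMeasure_historyMeasure : ∀ t, IsProbabilityMeasure (alg.historyMeasure a t)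
  | 0 => by
    rw [historyMeasure_zero]
    infer_instance
  | t + 1 => by
    have := isProbabilityMeasure_historyMeasure t
    rw [historyMeasure_succ]
    exact Measure.isProbabilityMeasure_map (measurable_snoc t).aemeasurable

variable {a} {b : Fin 2 → ℝ} {Δ : ℝ}

theorem sq_mul_historyDensity_midpoint_le (hΔ : ∀ i, |a i - b i| ≤ Δ) : ∀ t (h : Fin t → ℝ),
    (ENNReal.ofReal (Real.exp (-Δ ^ 2 / 8)) ^ t *
        alg.historyDensity (fun i => (a i + b i) / 2) t h) ^ 2 ≤
      alg.historyDensity a t h * alg.historyDensity b t h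
  | 0, _ => by simp [historyDensity]
  | t + 1, h => by
    have ih := sq_mul_historyDensity_midpoint_le hΔ t (Fin.init h)
    have reward := sq_ofReal_mul_gaussianPDF_midpoint_le (hΔ (alg.choose t (Fin.init h))) 1
      (h (Fin.last t))
    rw [NNReal.coe_one, mul_one] at reward
    simp only [historyDensity]
    rw [pow_succ (ENNReal.ofReal _) t, mul_mul_mul_comm, mul_pow, mul_mul_mul_comm]
    exact mul_le_mul' ih reward

theorem exp_pow_le_historyMeasure_add_historyMeasure_compl (hΔ : ∀ i, |a i - b i| ≤ Δ)
    {A : Set (Fin t → ℝ)} (hA : MeasurableSet A) :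
    Real.exp (-Δ ^ 2 / 4) ^ t / 2 ≤
      (alg.historyMeasure a t).real A + (alg.historyMeasure b t).real Aᶜ := by
  have affinity : ∫⁻ h, ENNReal.ofReal (Real.exp (-Δ ^ 2 / 8)) ^ t *
      alg.historyDensity (fun i => (a i + b i) / 2) t h =
        ENNReal.ofReal (Real.exp (-Δ ^ 2 / 8)) ^ t := by
    rw [lintegral_const_mul _ (alg.measurable_historyDensity _ t), ← setLIntegral_univ,
      ← withDensity_apply _ .univ, ← historyMeasure, measure_univ, mul_one]
  have isProbabilityMeasure_withDensity (a : Fin 2 → ℝ) :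
      IsProbabilityMeasure (volume.withDensity (alg.historyDensity a t)) :=
    alg.isProbabilityMeasure_historyMeasure a t
  have le_cam : (ENNReal.ofReal (Real.exp (-Δ ^ 2 / 8)) ^ t) ^ 2 ≤
      2 * (alg.historyMeasure a t A + alg.historyMeasure b t Aᶜ) := by
    rw [← affinity]
    exact sq_lintegral_le_two_mul_withDensity_add_withDensity_compl
      (alg.measurable_historyDensity a t) (alg.measurable_historyDensity b t)
      (alg.sq_mul_historyDensity_midpoint_le hΔ t) hA
  have exp_sq : (ENNReal.ofReal (Real.exp (-Δ ^ 2 / 8)) ^ t) ^ 2 =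
      ENNReal.ofReal (Real.exp (-Δ ^ 2 / 4) ^ t) := by
    rw [pow_right_comm, ← ENNReal.ofReal_pow (by positivity), ← Real.exp_nat_mul,
      ← ENNReal.ofReal_pow (by positivity)]
    ring_nf
  rw [exp_sq, ENNReal.ofReal_le_iff_le_toReal (by finiteness), ENNReal.toReal_mul,
    ENNReal.toReal_add (by finiteness) (by finiteness), ENNReal.toReal_ofNat] at le_cam
  simp only [measureReal_def]
  linarith

end Alg

/-- The rewards of the first `t` rounds, that is, what the algorithm sees before round `t + 1`. -/
def history (t : ℕ) (ω : Traj) : Fin t → ℝ := fun i => ω i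

theorem measurable_history (t : ℕ) : Measurable (history t) := by
  unfold history
  fun_prop

theorem measurable_armAt (alg : Alg) (t : ℕ) : Measurable (armAt alg t) :=
  (alg.measurable_choose (t - 1)).comp (measurable_history (t - 1))

section Environment

variable {Θ : Type*} {μ : Fin 2 → Θ → ℝ} {alg : Alg} {P : Θ → Measure Traj} {θ θ' : Θ} {δ Δ : ℝ}

theorem IsEnv.map_history_succ (hEnv : IsEnv μ alg P) (θ : Θ) (t : ℕ) :
    (P θ).map (history (t + 1)) =
      ((P θ).map (history t) ⊗ₘ alg.rewardKernel (fun i => μ i θ) t).map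
        fun z => Fin.snoc z.1 z.2 := by
  have := hEnv.1 θ
  have history_meas := measurable_history t
  have := Measure.isProbabilityMeasure_map (μ := P θ) history_meas.aemeasurable
  refine ext_of_forall_integral_eq_of_IsFiniteMeasure fun f => ?_
  have f_meas : Measurable f := f.continuous.measurable
  have f_snoc_meas : Measurable fun z : (Fin t → ℝ) × ℝ => f (Fin.snoc z.1 z.2) :=
    f_meas.comp (measurable_snoc t)
  have f_snoc_int : Integrable (fun z : (Fin t → ℝ) × ℝ => f (Fin.snoc z.1 z.2))
      ((P θ).map (history t) ⊗ₘ alg.rewardKernel (fun i => μ i θ) t) :=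
    .of_bound f_snoc_meas.aestronglyMeasurable ‖f‖ (ae_of_all _ fun _ => f.norm_coe_le_norm _)
  rw [integral_map (measurable_history _).aemeasurable f_meas.aestronglyMeasurable,
    integral_map (measurable_snoc t).aemeasurable f_meas.aestronglyMeasurable,
    Measure.integral_compProd f_snoc_int,
    integral_map history_meas.aemeasurable
      f_snoc_meas.stronglyMeasurable.integral_kernel_prod_right'.aestronglyMeasurable]
  exact hEnv.2 θ t f f_meas ⟨‖f‖, f.norm_coe_le_norm⟩

theorem IsEnv.map_history (hEnv : IsEnv μ alg P) (θ : Θ) :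
    ∀ t, (P θ).map (history t) = alg.historyMeasure (fun i => μ i θ) t
  | 0 => by
    have := hEnv.1 θ
    rw [Alg.historyMeasure_zero,
      show history 0 = fun _ => Fin.elim0 from funext fun _ => Subsingleton.elim _ _,
      Measure.map_const, measure_univ, one_smul]
  | t + 1 => by
    rw [hEnv.map_history_succ, hEnv.map_history θ t, Alg.historyMeasure_succ]

theorem IsEnv.exp_pow_le_measureReal_armAt_add (hEnv : IsEnv μ alg P)
    (hΔ : ∀ i, |μ i θ - μ i θ'| ≤ Δ) (t : ℕ) :
    Real.exp (-Δ ^ 2 / 4) ^ t / 2 ≤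
      (P θ).real (armAt alg (t + 1) ⁻¹' {0}) + (P θ').real (armAt alg (t + 1) ⁻¹' {1}) := by
  have choose_meas (i : Fin 2) : MeasurableSet (alg.choose t ⁻¹' {i}) :=
    alg.measurable_choose t (measurableSet_singleton i)
  have armAt_law (θ : Θ) (i : Fin 2) : (P θ).real (armAt alg (t + 1) ⁻¹' {i}) =
      (alg.historyMeasure (fun i => μ i θ) t).real (alg.choose t ⁻¹' {i}) := by
    rw [← hEnv.map_history, map_measureReal_apply (measurable_history t) (choose_meas i)]
    rfl
  have compl_zero : alg.choose t ⁻¹' {1} = (alg.choose t ⁻¹' {0})ᶜ := by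
    ext h
    simp only [Set.mem_preimage, Set.mem_singleton_iff, Set.mem_compl_iff]
    omega
  rw [armAt_law, armAt_law, compl_zero]
  exact alg.exp_pow_le_historyMeasure_add_historyMeasure_compl t hΔ (choose_meas 0)

theorem integrable_comp_armAt (ν : Measure Traj) [IsFiniteMeasure ν] (g : Fin 2 → ℝ) (t : ℕ) :
    Integrable (fun ω => g (armAt alg t ω)) ν :=
  (Integrable.of_finite (f := g)).comp_measurable (measurable_armAt alg t)

theorem expRegret_eq_sum_integral [IsFiniteMeasure (P θ)] (n : ℕ) : expRegret μ alg P θ n =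
    ∑ t ∈ Finset.range n, ∫ ω, max (μ 0 θ) (μ 1 θ) - μ (armAt alg (t + 1) ω) θ ∂P θ := by
  simp only [expRegret, regret]
  rw [integral_finsetSum _ fun t _ =>
      integrable_comp_armAt (P θ) (fun i => max (μ 0 θ) (μ 1 θ) - μ i θ) t,
    Finset.range_eq_Ico, Finset.sum_Ico_add'
      (fun t => ∫ ω, max (μ 0 θ) (μ 1 θ) - μ (armAt alg t ω) θ ∂P θ), zero_add,
    Finset.Ico_add_one_right_eq_Icc]

theorem mul_measureReal_armAt_le_integral (ν : Measure Traj) [IsFiniteMeasure ν]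
    {g : Fin 2 → ℝ} (hg : 0 ≤ g) {i : Fin 2} (hδ₀ : 0 ≤ δ) (hδ : δ ≤ g i) (t : ℕ) :
    δ * ν.real (armAt alg t ⁻¹' {i}) ≤ ∫ ω, g (armAt alg t ω) ∂ν := by
  have arm_le : armAt alg t ⁻¹' {i} ⊆ {ω | δ ≤ g (armAt alg t ω)} := by
    rintro ω rfl
    exact hδ
  calc δ * ν.real (armAt alg t ⁻¹' {i})
      ≤ δ * ν.real {ω | δ ≤ g (armAt alg t ω)} := by gcongr; finiteness
    _ ≤ ∫ ω, g (armAt alg t ω) ∂ν :=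
        mul_meas_ge_le_integral_of_nonneg (f := fun ω => g (armAt alg t ω))
          (ae_of_all _ fun _ => hg _) (integrable_comp_armAt ν g t) δ

theorem sum_mul_measureReal_armAt_le_expRegret [IsFiniteMeasure (P θ)] {i j : Fin 2}
    (hδ₀ : 0 ≤ δ) (hδ : δ ≤ μ i θ - μ j θ) (n : ℕ) :
    ∑ t ∈ Finset.range n, δ * (P θ).real (armAt alg (t + 1) ⁻¹' {j}) ≤
      expRegret μ alg P θ n := by
  have le_max_mean : ∀ i, μ i θ ≤ max (μ 0 θ) (μ 1 θ) :=
    Fin.forall_fin_two.2 ⟨le_max_left _ _, le_max_right _ _⟩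
  rw [expRegret_eq_sum_integral]
  gcongr with t
  exact mul_measureReal_armAt_le_integral (P θ) (g := fun i => max (μ 0 θ) (μ 1 θ) - μ i θ)
    (fun i => sub_nonneg.2 (le_max_mean i)) hδ₀ (by linarith [le_max_mean i]) (t + 1)

theorem IsEnv.mul_sum_exp_pow_le_expRegret_add_expRegret (hEnv : IsEnv μ alg P) (hδ₀ : 0 ≤ δ)
    (hθ : δ ≤ μ 1 θ - μ 0 θ) (hθ' : δ ≤ μ 0 θ' - μ 1 θ')
    (hΔ : ∀ i, |μ i θ - μ i θ'| ≤ Δ) (n : ℕ) :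
    δ / 2 * ∑ t ∈ Finset.range n, Real.exp (-Δ ^ 2 / 4) ^ t ≤
      expRegret μ alg P θ n + expRegret μ alg P θ' n := by
  have := hEnv.1 θ
  have := hEnv.1 θ'
  calc δ / 2 * ∑ t ∈ Finset.range n, Real.exp (-Δ ^ 2 / 4) ^ t
      = ∑ t ∈ Finset.range n, δ * (Real.exp (-Δ ^ 2 / 4) ^ t / 2) := by
        rw [Finset.mul_sum]
        exact Finset.sum_congr rfl fun _ _ => by ring
    _ ≤ ∑ t ∈ Finset.range n, δ * ((P θ).real (armAt alg (t + 1) ⁻¹' {0}) +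
          (P θ').real (armAt alg (t + 1) ⁻¹' {1})) := by
        gcongr with t
        exact hEnv.exp_pow_le_measureReal_armAt_add hΔ t
    _ = ∑ t ∈ Finset.range n, δ * (P θ).real (armAt alg (t + 1) ⁻¹' {0}) +
          ∑ t ∈ Finset.range n, δ * (P θ').real (armAt alg (t + 1) ⁻¹' {1}) := by
        simp only [mul_add, Finset.sum_add_distrib]
    _ ≤ expRegret μ alg P θ n + expRegret μ alg P θ' n :=
        add_le_add (sum_mul_measureReal_armAt_le_expRegret hδ₀ hθ n)
          (sum_mul_measureReal_armAt_le_expRegret hδ₀ hθ' n)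

end Environment

theorem eventually_lt_sum_exp_neg_pow {x y : ℝ} (hx : 0 < x) (hy : y < 1 / x) :
    ∀ᶠ n : ℕ in Filter.atTop, y < ∑ t ∈ Finset.range n, Real.exp (-x) ^ t := by
  have exp_lt_one : Real.exp (-x) < 1 := Real.exp_lt_one_iff.2 (by linarith)
  have lt_limit : y < (1 - Real.exp (-x))⁻¹ := by
    refine hy.trans_le ?_
    rw [one_div]
    exact inv_anti₀ (by linarith) (by linarith [Real.add_one_le_exp (-x)])
  exact (hasSum_geometric_of_lt_one (Real.exp_nonneg _) exp_lt_one).tendsto_sum_nat.eventually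
    (lt_mem_nhds lt_limit)

theorem lower_bound_symmetric_linear_general {Θ : Type*} {μ : Fin 2 → Θ → ℝ} {alg : Alg}
    {P : Θ → Measure Traj} (hEnv : IsEnv μ alg P) {θ θ' : Θ} {δ Δ c : ℝ} (hδ : 0 < δ)
    (hθ : δ ≤ μ 1 θ - μ 0 θ) (hθ' : δ ≤ μ 0 θ' - μ 1 θ')
    (hΔ : ∀ i, |μ i θ - μ i θ'| ≤ Δ) (hc : c < δ / Δ ^ 2) :
    ∃ N : ℕ, ∀ n : ℕ, N ≤ n →
      c ≤ max (expRegret μ alg P θ n) (expRegret μ alg P θ' n) := by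
  have Δ_pos : 0 < Δ := by
    have := (le_abs_self _).trans (hΔ 1)
    have := (neg_le_abs _).trans (hΔ 0)
    linarith
  have c_lt : 4 * c / δ < 1 / (Δ ^ 2 / 4) := by
    rw [div_lt_iff₀ hδ]
    calc 4 * c < 4 * (δ / Δ ^ 2) := by gcongr
      _ = 1 / (Δ ^ 2 / 4) * δ := by field
  obtain ⟨N, hN⟩ := Filter.eventually_atTop.1
    (eventually_lt_sum_exp_neg_pow (by positivity) c_lt)
  refine ⟨N, fun n hn => ?_⟩
  have c_le_sum : 2 * c ≤ δ / 2 * ∑ t ∈ Finset.range n, Real.exp (-Δ ^ 2 / 4) ^ t :=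
    calc 2 * c = δ / 2 * (4 * c / δ) := by field
      _ ≤ _ := by
        rw [neg_div]
        gcongr
        exact (hN n hn).le
  have sum_le := hEnv.mul_sum_exp_pow_le_expRegret_add_expRegret hδ.le hθ hθ' hΔ n
  rw [le_max_iff]
  by_contra! ⟨_, _⟩
  linarith

/-- **Lower bound for the bandit of Figure 3(a).** For the two-armed structured bandit with
`Θ = ℝ`, `μ₁(θ) = θ`, `μ₂(θ) = −θ` and unit-variance normal rewards, for every `θ > 0` and
every algorithm, `max{E_{−θ} R_n(−θ), E_θ R_n(θ)} ≥ 1/(8θ)` for all sufficiently large `n`. -/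
theorem lower_bound_symmetric_linear
    (alg : Alg) (P : ℝ → Measure Traj)
    (hEnv : IsEnv (fun i θ => if i = 0 then θ else -θ) alg P)
    (θ : ℝ) (hθ : 0 < θ) :
    ∃ N : ℕ, ∀ n : ℕ, N ≤ n →
      1 / (8 * θ) ≤
        max (expRegret (fun i θ => if i = 0 then θ else -θ) alg P (-θ) n)
            (expRegret (fun i θ => if i = 0 then θ else -θ) alg P θ n) := by
  have lt_gap_div_sq : 1 / (8 * θ) < 2 * θ / (2 * θ) ^ 2 := by
    rw [div_lt_div_iff₀ (by positivity) (by positivity)]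
    nlinarith [sq_pos_of_pos hθ]
  refine lower_bound_symmetric_linear_general hEnv (δ := 2 * θ) (by positivity) ?_ ?_
    (Fin.forall_fin_two.2 ⟨?_, ?_⟩) lt_gap_div_sq
  · simp [two_mul]
  · simp [two_mul]
  · simp only [if_true, abs_le]
    constructor <;> linarith
  · simp only [one_ne_zero, if_false, abs_le]
    constructor <;> linarith

end TwoArmedBandit
end

section
/- Consider the two-armed structured bandit with Θ = [−1, 1], μ_1(θ) = −θ·1{θ > 0}, μ_2(θ) = −1{θ ≤ 0}, where rewards are normally distributed with unit variance. There exists an algorithm such that max{E_0 R_n(0), sup_{θ > 0} θ·E_θ R_n(θ)} ∈ O(log log n); in particular this maximum is not Ω(log n). -/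
open MeasureTheory ProbabilityTheory

namespace TwoArmedBandit

/-- The mean functions of the bandit of Figure 4(a): `Θ = [−1,1]`,
`μ₁(θ) = −θ·1{θ > 0}` and `μ₂(θ) = −1{θ ≤ 0}`. -/
noncomputable def muAmb : Fin 2 → ℝ → ℝ := fun i θ =>
  if i = 0 then (if 0 < θ then -θ else 0) else (if θ ≤ 0 then -1 else 0)

/-!
Arm 1 is optimal at `θ = 0`, with means `0` and `-1`, and arm 2 at `θ > 0`, with means `-θ` and
`0`. Play arm 1 by default. Each time its number of plays is some `2 ^ k`, test whether its mean is
`0`, rejecting at a deviation of order `√(2 ^ k * log (k + 1))`; upon rejection, play arm 2 for as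
long as its own rewards are compatible with mean `0`.

At `θ = 0` the `k`-th test rejects with probability at most `(k + 1)⁻³`, and a rejection costs
`O(k + 1)` plays of arm 2, so the regret is bounded. At `θ > 0`, as soon as
`24 * log (k + 1) ≤ θ ^ 2 * 2 ^ k`, the `k`-th test fails to reject with probability at most
`exp (-θ ^ 2 * 2 ^ k / 8)`, and arm 2 is wrongly abandoned with probability at most
`exp (-2 * (k + 1))`. Only `k` with `2 ^ k ≤ n` matter, and for those `log (k + 1) = O(log log n)`,
whence `θ ^ 2` times the expected number of plays of arm 1 is `O(log log n)`.

The number of plays of an arm by a given round is random and depends on the rewards; Ville's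
inequality for exponential martingales bounds the deviations at all rounds simultaneously.
-/

section DyadicSums

lemma sum_ite_mul_two_pow_le {r M : ℝ} (hr : 0 ≤ r) (hM : 0 ≤ M) (K : ℕ) :
    ∑ k ∈ Finset.range K, (if r * 2 ^ k ≤ M then r * 2 ^ k else 0) ≤ 2 * M := by
  induction K with
  | zero => simpa using hM
  | succ K ih =>
    rw [Finset.sum_range_succ]
    split_ifs with h
    · have hle : ∑ k ∈ Finset.range K, (if r * 2 ^ k ≤ M then r * 2 ^ k else 0) ≤
          ∑ k ∈ Finset.range K, r * 2 ^ k :=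
        Finset.sum_le_sum fun k _ => by split_ifs <;> first | exact le_rfl | positivity
      rw [← Finset.mul_sum, geom_sum_eq (by norm_num)] at hle
      linarith
    · linarith

lemma sum_mul_exp_neg_mul_two_pow_le {r : ℝ} (hr : 0 ≤ r) (K : ℕ) :
    ∑ k ∈ Finset.range K, r * 2 ^ k * Real.exp (-(r * 2 ^ k)) ≤ 2 := by
  -- `y * exp (-y) ≤ 2 * (exp (-y / 2) - exp (-y))`, which telescopes along `y = r * 2 ^ k`.
  have telescope : ∀ y : ℝ,
      y * Real.exp (-y) ≤ 2 * Real.exp (-(y / 2)) - 2 * Real.exp (-y) := fun y => by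
    have hsplit : Real.exp (-(y / 2)) = Real.exp (y / 2) * Real.exp (-y) := by
      rw [← Real.exp_add]; ring_nf
    have := mul_le_mul_of_nonneg_right (Real.add_one_le_exp (y / 2)) (Real.exp_nonneg (-y))
    linarith
  have hsum : ∑ k ∈ Finset.range K, r * 2 ^ k * Real.exp (-(r * 2 ^ k)) ≤
      2 - 2 * Real.exp (-(r * 2 ^ K / 2)) := by
    induction K with
    | zero => simpa using by positivity
    | succ K ih =>
      rw [Finset.sum_range_succ, show r * 2 ^ (K + 1) / 2 = r * 2 ^ K by ring]
      linarith [telescope (r * 2 ^ K)]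
  linarith [Real.exp_pos (-(r * 2 ^ K / 2))]

lemma exp_neg_natCast_le_half_pow (n : ℕ) : Real.exp (-n) ≤ (1 / 2) ^ n := by
  have hexp : Real.exp (-1) ≤ 1 / 2 := by
    rw [Real.exp_neg, one_div]
    exact inv_anti₀ two_pos (by linarith [Real.add_one_le_exp 1])
  calc Real.exp (-n) = Real.exp (-1) ^ n := by rw [← Real.exp_nat_mul]; ring_nf
    _ ≤ (1 / 2) ^ n := pow_le_pow_left₀ (Real.exp_nonneg _) hexp n

lemma sum_exp_neg_succ_le_one (K : ℕ) :
    ∑ k ∈ Finset.range K, Real.exp (-((k : ℝ) + 1)) ≤ 1 :=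
  calc ∑ k ∈ Finset.range K, Real.exp (-((k : ℝ) + 1))
      ≤ ∑ k ∈ Finset.range K, (1 / 2 : ℝ) ^ k * (1 / 2) := Finset.sum_le_sum fun k _ => by
        simpa [pow_succ] using exp_neg_natCast_le_half_pow (k + 1)
    _ ≤ 1 := by rw [← Finset.sum_mul]; linarith [sum_geometric_two_le K]

lemma sum_two_pow_mul_exp_le_one (K : ℕ) :
    ∑ k ∈ Finset.range K, 2 ^ k * Real.exp (-(2 * ((k : ℝ) + 1))) ≤ 1 := by
  refine (Finset.sum_le_sum fun k _ => ?_).trans (sum_exp_neg_succ_le_one K)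
  have hexp : Real.exp (-((k : ℝ) + 1)) ≤ (1 / 2) ^ (k + 1) := by
    simpa using exp_neg_natCast_le_half_pow (k + 1)
  have hpow : (2 : ℝ) ^ k * (1 / 2) ^ (k + 1) ≤ 1 := by
    rw [pow_succ, ← mul_assoc, ← mul_pow]; norm_num
  calc (2 : ℝ) ^ k * Real.exp (-(2 * ((k : ℝ) + 1)))
      = 2 ^ k * Real.exp (-((k : ℝ) + 1)) * Real.exp (-((k : ℝ) + 1)) := by
        rw [mul_assoc, ← Real.exp_add]; ring_nf
    _ ≤ 1 * Real.exp (-((k : ℝ) + 1)) := by gcongr; exact le_trans (by gcongr) hpow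
    _ = Real.exp (-((k : ℝ) + 1)) := one_mul _

lemma sum_inv_succ_sq_le_two (K : ℕ) : ∑ k ∈ Finset.range K, (((k : ℝ) + 1) ^ 2)⁻¹ ≤ 2 := by
  have h := sum_Ioo_inv_sq_le (α := ℝ) 0 (K + 1)
  rw [← Finset.Ico_add_one_left_eq_Ioo, ← Finset.sum_Ico_add' (fun i : ℕ => ((i : ℝ) ^ 2)⁻¹)] at h
  simpa using h

lemma natCast_le_one_add_sum_two_pow {K N : ℕ} (h : N ≤ 2 ^ K) :
    (N : ℝ) ≤ 1 + ∑ k ∈ Finset.range K, if 2 ^ k < N then (2 : ℝ) ^ k else 0 := by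
  induction K with
  | zero => simpa using h
  | succ K ih =>
    rw [Finset.sum_range_succ]
    rcases le_or_gt N (2 ^ K) with hN | hN
    · simpa only [if_neg hN.not_gt, add_zero] using ih hN
    · have hall : ∀ k ∈ Finset.range K, (if 2 ^ k < N then (2 : ℝ) ^ k else 0) = 2 ^ k :=
        fun k hk => if_pos <|
          (Nat.pow_le_pow_right two_pos (Finset.mem_range.1 hk).le).trans_lt hN
      have hcast : (N : ℝ) ≤ 2 ^ (K + 1) := by exact_mod_cast h
      rw [if_pos hN, Finset.sum_congr rfl hall, geom_sum_eq (by norm_num)]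
      linarith [pow_succ (2 : ℝ) K]

lemma integral_natCast_le_one_add_sum_two_pow {Ω : Type*} [MeasurableSpace Ω] {P : Measure Ω}
    [IsProbabilityMeasure P] {X : Ω → ℕ} (hX : Measurable X) {K : ℕ} (hK : ∀ ω, X ω ≤ 2 ^ K) :
    ∫ ω, (X ω : ℝ) ∂P ≤ 1 + ∑ k ∈ Finset.range K, 2 ^ k * P.real {ω | 2 ^ k < X ω} := by
  have hmeas : ∀ k, MeasurableSet {ω | 2 ^ k < X ω} := fun k =>
    measurableSet_lt measurable_const hX
  have hint : ∀ k, Integrable ({ω | 2 ^ k < X ω}.indicator fun _ => (2 : ℝ) ^ k) P := fun k =>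
    (integrable_const _).indicator (hmeas k)
  calc ∫ ω, (X ω : ℝ) ∂P
      ≤ ∫ ω, (1 + ∑ k ∈ Finset.range K,
          {ω | 2 ^ k < X ω}.indicator (fun _ => (2 : ℝ) ^ k) ω) ∂P := by
        refine integral_mono_of_nonneg (ae_of_all _ fun ω => Nat.cast_nonneg _)
          ((integrable_const _).add (integrable_finsetSum _ fun k _ => hint k))
          (ae_of_all _ fun ω => ?_)
        simpa only [Set.indicator_apply, Set.mem_ofPred_eq] using
          natCast_le_one_add_sum_two_pow (hK ω)
    _ = 1 + ∑ k ∈ Finset.range K, 2 ^ k * P.real {ω | 2 ^ k < X ω} := by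
        rw [integral_add (integrable_const _) (integrable_finsetSum _ fun k _ => hint k),
          integral_finsetSum _ fun k _ => hint k]
        simp [integral_indicator_const _ (hmeas _), mul_comm]

end DyadicSums

section LogLog

lemma one_le_log_log {n : ℕ} (hn : 16 ≤ n) : 1 ≤ Real.log (Real.log n) := by
  have hlog16 : Real.log 16 = 4 * Real.log 2 := by
    rw [show (16 : ℝ) = 2 ^ 4 by norm_num, Real.log_pow]; norm_num
  have hlog : Real.log 16 ≤ Real.log n := Real.log_le_log (by norm_num) (by exact_mod_cast hn)
  have hexp : Real.exp 1 ≤ Real.log n := by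
    linarith [Real.exp_one_lt_d9, Real.log_two_gt_d9]
  exact (Real.le_log_iff_exp_le ((Real.exp_pos 1).trans_le hexp)).2 hexp

lemma log_natCast_add_one_le_three_mul_log_log {n k : ℕ} (hn : 16 ≤ n) (hk : 2 ^ k ≤ n) :
    Real.log (k + 1) ≤ 3 * Real.log (Real.log n) := by
  have hll := one_le_log_log hn
  have hlog : 1 ≤ Real.log n := by
    have hn1 : (1 : ℝ) ≤ n := by exact_mod_cast (by omega : 1 ≤ n)
    linarith [Real.log_le_self (Real.log_nonneg hn1)]
  have hk' : (k : ℝ) * Real.log 2 ≤ Real.log n := by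
    rw [← Real.log_pow]
    exact Real.log_le_log (by positivity) (by exact_mod_cast hk)
  have hk3 : (k : ℝ) + 1 ≤ 3 * Real.log n := by
    nlinarith [Real.log_two_gt_d9, Nat.cast_nonneg (α := ℝ) k]
  calc Real.log (k + 1) ≤ Real.log (3 * Real.log n) := Real.log_le_log (by positivity) hk3
    _ = Real.log 3 + Real.log (Real.log n) := Real.log_mul (by norm_num) (by linarith)
    _ ≤ 3 * Real.log (Real.log n) := by
      linarith [Real.log_le_sub_one_of_pos (by norm_num : (0 : ℝ) < 3)]

end LogLog

section History

/-- The first `t` rewards of a trajectory, in the form in which an algorithm receives them. -/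
def hist (t : ℕ) (ω : Traj) : Fin t → ℝ := fun i => ω i

/-- The number of plays of arm `i` by `alg` along a history of rewards. -/
def pulls (alg : Alg) (i : Fin 2) : ∀ {t : ℕ}, (Fin t → ℝ) → ℕ
  | 0, _ => 0
  | t + 1, h =>
    pulls alg i (Fin.init h) + if alg.choose t (Fin.init h) = i then 1 else 0

/-- The sum of the rewards collected by `alg` from arm `i` along a history of rewards. -/
def rewardSum (alg : Alg) (i : Fin 2) : ∀ {t : ℕ}, (Fin t → ℝ) → ℝ
  | 0, _ => 0
  | t + 1, h =>
    rewardSum alg i (Fin.init h) + if alg.choose t (Fin.init h) = i then h (Fin.last t) else 0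

variable {alg : Alg} {i : Fin 2} {t n m : ℕ} {ω : Traj}

lemma measurable_hist (t : ℕ) : Measurable (hist t) :=
  measurable_pi_lambda _ fun _ => measurable_pi_apply _

lemma measurable_init (t : ℕ) : Measurable (Fin.init : (Fin (t + 1) → ℝ) → Fin t → ℝ) :=
  measurable_pi_lambda _ fun _ => measurable_pi_apply _

lemma measurable_snoc_s10 (t : ℕ) :
    Measurable fun p : (Fin t → ℝ) × ℝ => (Fin.snoc p.1 p.2 : Fin (t + 1) → ℝ) := by
  refine measurable_pi_lambda _ fun j => Fin.lastCases ?_ (fun j => ?_) j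
  · simpa only [Fin.snoc_last] using measurable_snd
  · simpa only [Fin.snoc_castSucc] using measurable_fst.eval (a := j)

lemma pulls_hist_succ (alg : Alg) (i : Fin 2) (t : ℕ) (ω : Traj) :
    pulls alg i (hist (t + 1) ω) =
      pulls alg i (hist t ω) + if alg.choose t (hist t ω) = i then 1 else 0 :=
  rfl

lemma measurableSet_choose_init_eq (alg : Alg) (i : Fin 2) (t : ℕ) :
    MeasurableSet {h : Fin (t + 1) → ℝ | alg.choose t (Fin.init h) = i} :=
  (alg.measurable_choose t).comp (measurable_init t) (measurableSet_singleton i)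

lemma measurable_pulls (alg : Alg) (i : Fin 2) :
    ∀ t : ℕ, Measurable (pulls alg i : (Fin t → ℝ) → ℕ)
  | 0 => measurable_const
  | t + 1 => ((measurable_pulls alg i t).comp (measurable_init t)).add <|
      Measurable.ite (measurableSet_choose_init_eq alg i t) measurable_const measurable_const

lemma measurable_rewardSum (alg : Alg) (i : Fin 2) :
    ∀ t : ℕ, Measurable (rewardSum alg i : (Fin t → ℝ) → ℝ)
  | 0 => measurable_const
  | t + 1 => ((measurable_rewardSum alg i t).comp (measurable_init t)).add <|
      Measurable.ite (measurableSet_choose_init_eq alg i t) (measurable_pi_apply _)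
        measurable_const

lemma pulls_hist_le (alg : Alg) (i : Fin 2) (t : ℕ) (ω : Traj) : pulls alg i (hist t ω) ≤ t := by
  induction t with
  | zero => exact le_rfl
  | succ t ih => rw [pulls_hist_succ]; split_ifs <;> omega

lemma pulls_hist_le_two_pow (alg : Alg) (i : Fin 2) (t : ℕ) (ω : Traj) :
    pulls alg i (hist t ω) ≤ 2 ^ t :=
  (pulls_hist_le alg i t ω).trans Nat.lt_two_pow_self.le

lemma exists_pulls_eq_and_choose_eq (h : m < pulls alg i (hist n ω)) :
    ∃ t < n, pulls alg i (hist t ω) = m ∧ alg.choose t (hist t ω) = i := by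
  induction n with
  | zero => exact absurd h (Nat.not_lt_zero m)
  | succ n ih =>
    by_cases hm : m < pulls alg i (hist n ω)
    · obtain ⟨t, ht, hpulls⟩ := ih hm
      exact ⟨t, ht.trans n.lt_succ_self, hpulls⟩
    · rw [pulls_hist_succ] at h
      split_ifs at h with harm
      · exact ⟨n, n.lt_succ_self, by omega, harm⟩
      · omega

lemma regret_eq_sum_gap_mul_pulls {Θ : Type*} (μ : Fin 2 → Θ → ℝ) (alg : Alg) (θ : Θ) (n : ℕ)
    (ω : Traj) :
    regret μ alg θ n ω =
      ∑ i, (max (μ 0 θ) (μ 1 θ) - μ i θ) * (pulls alg i (hist n ω) : ℝ) := by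
  induction n with
  | zero => simp [regret, pulls]
  | succ n ih =>
    have harm : armAt alg (n + 1) ω = alg.choose n (hist n ω) := rfl
    unfold regret at ih ⊢
    rw [Finset.sum_Icc_succ_top n.succ_pos, ih, harm]
    simp only [pulls_hist_succ, Nat.cast_add, mul_add, Finset.sum_add_distrib]
    simp

end History

section Environment

variable {Θ : Type*} {μ : Fin 2 → Θ → ℝ} {alg : Alg} {P : Θ → Measure Traj}

/-- The conditional law of the next reward given the trajectory up to time `t`, when arm `i`
yields `N(ν i, 1)`-distributed rewards. -/
noncomputable def rewardKernel (ν : Fin 2 → ℝ) (alg : Alg) (t : ℕ) : Kernel (Fin t → ℝ) ℝ :=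
  (⟨fun i => gaussianReal (ν i) 1, measurable_of_finite _⟩ : Kernel (Fin 2) ℝ).comap
    (alg.choose t) (alg.measurable_choose t)

lemma rewardKernel_apply (ν : Fin 2 → ℝ) (alg : Alg) (t : ℕ) (h : Fin t → ℝ) :
    rewardKernel ν alg t h = gaussianReal (ν (alg.choose t h)) 1 :=
  rfl

instance (ν : Fin 2 → ℝ) (alg : Alg) (t : ℕ) : IsMarkovKernel (rewardKernel ν alg t) :=
  ⟨fun h => by rw [rewardKernel_apply]; infer_instance⟩

lemma IsEnv.map_hist_succ (hP : IsEnv μ alg P) (θ : Θ) (t : ℕ) :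
    (P θ).map (hist (t + 1)) =
      ((P θ).map (hist t) ⊗ₘ rewardKernel (μ · θ) alg t).map fun p => Fin.snoc p.1 p.2 := by
  have := hP.1 θ
  have := Measure.isProbabilityMeasure_map (μ := P θ) (measurable_hist t).aemeasurable
  have := Measure.isProbabilityMeasure_map (μ := P θ) (measurable_hist (t + 1)).aemeasurable
  refine ext_of_forall_integral_eq_of_IsFiniteMeasure fun f => ?_
  have hf := f.continuous.measurable
  have hfs : Measurable fun p : (Fin t → ℝ) × ℝ => f (Fin.snoc p.1 p.2) :=
    hf.comp (measurable_snoc_s10 t)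
  have hint : Integrable (fun p : (Fin t → ℝ) × ℝ => f (Fin.snoc p.1 p.2))
      ((P θ).map (hist t) ⊗ₘ rewardKernel (μ · θ) alg t) :=
    .of_bound hfs.aestronglyMeasurable ‖f‖ (ae_of_all _ fun p => f.norm_coe_le_norm _)
  rw [integral_map (measurable_hist _).aemeasurable hf.aestronglyMeasurable,
    integral_map (measurable_snoc_s10 t).aemeasurable hf.aestronglyMeasurable,
    Measure.integral_compProd hint,
    integral_map (measurable_hist t).aemeasurable
      hfs.stronglyMeasurable.integral_kernel_prod_right'.aestronglyMeasurable]
  exact hP.2 θ t f hf ⟨‖f‖, f.norm_coe_le_norm⟩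

lemma IsEnv.lintegral_hist_succ (hP : IsEnv μ alg P) (θ : Θ) {t : ℕ}
    {f : (Fin (t + 1) → ℝ) → ENNReal} (hf : Measurable f) :
    ∫⁻ ω, f (hist (t + 1) ω) ∂(P θ) =
      ∫⁻ ω, ∫⁻ x, f (Fin.snoc (hist t ω) x)
        ∂(gaussianReal (μ (alg.choose t (hist t ω)) θ) 1) ∂(P θ) := by
  have := hP.1 θ
  have hfs : Measurable fun p : (Fin t → ℝ) × ℝ => f (Fin.snoc p.1 p.2) :=
    hf.comp (measurable_snoc_s10 t)
  rw [← lintegral_map hf (measurable_hist _), hP.map_hist_succ θ t,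
    lintegral_map hf (measurable_snoc_s10 t), Measure.lintegral_compProd hfs,
    lintegral_map hfs.lintegral_kernel_prod_right' (measurable_hist t)]
  rfl

end Environment

section Supermartingale

/-- `M t h` is a nonnegative supermartingale, viewed as a function of the reward history `h` at
time `t`, under the interaction of `alg` with arms yielding `N(ν i, 1)`-distributed rewards. -/
structure IsHistSupermartingale (ν : Fin 2 → ℝ) (alg : Alg)
    (M : ∀ t : ℕ, (Fin t → ℝ) → ENNReal) : Prop where
  measurable : ∀ t, Measurable (M t)
  lintegral_snoc_le : ∀ t h,
    ∫⁻ x, M (t + 1) (Fin.snoc h x) ∂(gaussianReal (ν (alg.choose t h)) 1) ≤ M t h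

/-- The process `M` stopped the first time it reaches the level `c`. -/
noncomputable def stoppedAt (c : ENNReal) (M : ∀ t : ℕ, (Fin t → ℝ) → ENNReal) :
    ∀ t : ℕ, (Fin t → ℝ) → ENNReal
  | 0, h => M 0 h
  | t + 1, h =>
    if c ≤ stoppedAt c M t (Fin.init h) then stoppedAt c M t (Fin.init h) else M (t + 1) h

variable {Θ : Type*} {μ : Fin 2 → Θ → ℝ} {alg : Alg} {P : Θ → Measure Traj} {ν : Fin 2 → ℝ}
  {M : ∀ t : ℕ, (Fin t → ℝ) → ENNReal} {c : ENNReal}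

lemma stoppedAt_eq_of_lt {t : ℕ} {h : Fin t → ℝ} (hlt : stoppedAt c M t h < c) :
    stoppedAt c M t h = M t h := by
  cases t with
  | zero => rfl
  | succ t =>
    rw [stoppedAt] at hlt ⊢
    split_ifs at hlt ⊢ with hc
    · exact absurd hlt hc.not_gt
    · rfl

lemma le_stoppedAt_hist {s t : ℕ} {ω : Traj} (hst : s ≤ t) (hc : c ≤ M s (hist s ω)) :
    c ≤ stoppedAt c M t (hist t ω) := by
  induction t, hst using Nat.le_induction with
  | base =>
    by_contra! hlt
    exact (stoppedAt_eq_of_lt hlt ▸ hlt).not_ge hc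
  | succ t _ ih => exact ih.trans_eq (if_pos ih).symm

lemma isHistSupermartingale_stoppedAt (hM : IsHistSupermartingale ν alg M) (c : ENNReal) :
    IsHistSupermartingale ν alg (stoppedAt c M) where
  measurable t := by
    induction t with
    | zero => exact hM.measurable 0
    | succ t ih =>
      have ih' := ih.comp (measurable_init t)
      exact Measurable.ite (measurableSet_le measurable_const ih') ih' (hM.measurable (t + 1))
  lintegral_snoc_le t h := by
    simp only [stoppedAt, Fin.init_snoc]
    split_ifs with hc
    · simp
    · exact (hM.lintegral_snoc_le t h).trans_eq (stoppedAt_eq_of_lt (not_le.1 hc)).symm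

lemma IsHistSupermartingale.lintegral_hist_le {θ : Θ}
    (hM : IsHistSupermartingale (μ · θ) alg M) (hP : IsEnv μ alg P) (t : ℕ) :
    ∫⁻ ω, M t (hist t ω) ∂(P θ) ≤ M 0 Fin.elim0 := by
  have := hP.1 θ
  induction t with
  | zero => simp [Subsingleton.elim (hist 0 _) Fin.elim0]
  | succ t ih =>
    rw [hP.lintegral_hist_succ θ (hM.measurable _)]
    exact (lintegral_mono fun ω => hM.lintegral_snoc_le t (hist t ω)).trans ih

/-- Ville's inequality. -/
lemma IsHistSupermartingale.mul_measure_exists_le {θ : Θ}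
    (hM : IsHistSupermartingale (μ · θ) alg M) (hP : IsEnv μ alg P) (c : ENNReal) :
    c * P θ {ω | ∃ t, c ≤ M t (hist t ω)} ≤ M 0 Fin.elim0 := by
  have hunion : {ω | ∃ t, c ≤ M t (hist t ω)} =
      ⋃ n : ℕ, {ω | ∃ t ≤ n, c ≤ M t (hist t ω)} := by
    ext ω
    simpa using ⟨fun ⟨t, h⟩ => ⟨t, t, le_rfl, h⟩, fun ⟨_, t, _, h⟩ => ⟨t, h⟩⟩
  have hmono : Monotone fun n : ℕ => {ω | ∃ t ≤ n, c ≤ M t (hist t ω)} :=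
    fun _ _ hnm _ ⟨t, ht, h⟩ => ⟨t, ht.trans hnm, h⟩
  have hstopped := isHistSupermartingale_stoppedAt hM c
  rw [hunion, hmono.measure_iUnion, ENNReal.mul_iSup]
  refine iSup_le fun n => ?_
  calc c * P θ {ω | ∃ t ≤ n, c ≤ M t (hist t ω)}
      ≤ c * P θ {ω | c ≤ stoppedAt c M n (hist n ω)} := by
        gcongr
        rintro ⟨t, ht, h⟩
        exact le_stoppedAt_hist ht h
    _ ≤ ∫⁻ ω, stoppedAt c M n (hist n ω) ∂(P θ) :=
        mul_meas_ge_le_lintegral ((hstopped.measurable n).comp (measurable_hist n)) c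
    _ ≤ M 0 Fin.elim0 := hstopped.lintegral_hist_le hP n

/-- The exponent of the exponential martingale with parameter `l` attached to the rewards of arm
`i` when their mean is `m`. -/
noncomputable def tiltExponent (alg : Alg) (i : Fin 2) (m l : ℝ) {t : ℕ} (h : Fin t → ℝ) : ℝ :=
  l * (rewardSum alg i h - m * pulls alg i h) - l ^ 2 / 2 * pulls alg i h

lemma tiltExponent_snoc (alg : Alg) (i : Fin 2) (m l : ℝ) {t : ℕ} (h : Fin t → ℝ) (x : ℝ) :
    tiltExponent alg i m l (Fin.snoc h x : Fin (t + 1) → ℝ) =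
      tiltExponent alg i m l h + if alg.choose t h = i then l * (x - m) - l ^ 2 / 2 else 0 := by
  simp only [tiltExponent, rewardSum, pulls, Fin.init_snoc, Fin.snoc_last]
  split_ifs <;> push_cast <;> ring

lemma lintegral_exp_tilt_gaussianReal (m l : ℝ) (v : NNReal) :
    ∫⁻ x, ENNReal.ofReal (Real.exp (l * (x - m) - v * l ^ 2 / 2)) ∂(gaussianReal m v) = 1 := by
  have hfactor : ∀ x : ℝ, Real.exp (l * (x - m) - v * l ^ 2 / 2) =
      Real.exp (l * x) * Real.exp (-(m * l + v * l ^ 2 / 2)) := fun x => by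
    rw [← Real.exp_add]; ring_nf
  have hmgf : ∫ x, Real.exp (l * x) ∂(gaussianReal m v) = Real.exp (m * l + v * l ^ 2 / 2) :=
    congrFun mgf_id_gaussianReal l
  simp_rw [hfactor]
  rw [← ofReal_integral_eq_lintegral_ofReal ((integrable_exp_mul_gaussianReal l).mul_const _)
    (ae_of_all _ fun x => by positivity), integral_mul_const, hmgf, ← Real.exp_add,
    add_neg_cancel, Real.exp_zero, ENNReal.ofReal_one]

lemma isHistSupermartingale_exp_tiltExponent (ν : Fin 2 → ℝ) (alg : Alg) (i : Fin 2) (l : ℝ) :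
    IsHistSupermartingale ν alg
      fun _ h => ENNReal.ofReal (Real.exp (tiltExponent alg i (ν i) l h)) where
  measurable t := by
    have hpulls : Measurable fun h : Fin t → ℝ => (pulls alg i h : ℝ) :=
      measurable_from_nat.comp (measurable_pulls alg i t)
    have hsum := measurable_rewardSum alg i t
    unfold tiltExponent
    fun_prop
  lintegral_snoc_le t h := by
    simp_rw [tiltExponent_snoc, Real.exp_add, ENNReal.ofReal_mul (Real.exp_nonneg _)]
    rw [lintegral_const_mul' _ _ ENNReal.ofReal_ne_top]
    split_ifs with harm
    · have hone := lintegral_exp_tilt_gaussianReal (ν i) l 1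
      simp only [NNReal.coe_one, one_mul] at hone
      rw [harm, hone, mul_one]
    · simp

lemma IsEnv.measureReal_exists_le_tiltExponent_le (hP : IsEnv μ alg P) (θ : Θ) (i : Fin 2)
    (l a : ℝ) :
    (P θ).real {ω | ∃ t, a ≤ tiltExponent alg i (μ i θ) l (hist t ω)} ≤ Real.exp (-a) := by
  have hville := (isHistSupermartingale_exp_tiltExponent (μ · θ) alg i l).mul_measure_exists_le hP
    (ENNReal.ofReal (Real.exp a))
  have hstart : tiltExponent alg i (μ i θ) l (Fin.elim0 : Fin 0 → ℝ) = 0 := by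
    simp [tiltExponent, rewardSum, pulls]
  simp only [ENNReal.ofReal_le_ofReal_iff (Real.exp_nonneg _), Real.exp_le_exp, hstart,
    Real.exp_zero, ENNReal.ofReal_one] at hville
  have hreal := ENNReal.toReal_mono ENNReal.one_ne_top hville
  rw [ENNReal.toReal_mul, ENNReal.toReal_ofReal (Real.exp_nonneg _), ENNReal.toReal_one] at hreal
  rw [Real.exp_neg, ← one_div, le_div_iff₀' (Real.exp_pos a)]
  exact hreal

end Supermartingale

section DyadicTest

/-- The number of plays and the sum of the rewards of each arm. -/
abbrev Stats : Type := Fin 2 → ℕ × ℝ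

/-- The statistics of a history of rewards collected by `alg`. -/
def stats (alg : Alg) {t : ℕ} (h : Fin t → ℝ) : Stats :=
  fun i => (pulls alg i h, rewardSum alg i h)

/-- The statistics of a history of rewards collected by playing according to `π`, a map from the
current statistics to the next arm. -/
def policyStats (π : Stats → Fin 2) : ∀ {t : ℕ}, (Fin t → ℝ) → Stats
  | 0, _ => 0
  | t + 1, h =>
    policyStats π (Fin.init h) + Pi.single (π (policyStats π (Fin.init h))) (1, h (Fin.last t))

lemma measurable_policyStats {π : Stats → Fin 2} (hπ : Measurable π) :
    ∀ t : ℕ, Measurable (policyStats π : (Fin t → ℝ) → Stats)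
  | 0 => measurable_const
  | t + 1 => by
    have hprev := (measurable_policyStats hπ t).comp (measurable_init t)
    refine measurable_pi_lambda _ fun i => hprev.eval.add ?_
    simp only [Pi.single_apply]
    exact Measurable.ite (measurableSet_eq_fun measurable_const (hπ.comp hprev))
      (measurable_const.prodMk (measurable_pi_apply _)) measurable_const

/-- The algorithm choosing the next arm from the current statistics through `π`. -/
def Alg.ofPolicy (π : Stats → Fin 2) (hπ : Measurable π) : Alg where
  choose _ h := π (policyStats π h)
  measurable_choose t := hπ.comp (measurable_policyStats hπ t)

lemma policyStats_eq_stats_ofPolicy (π : Stats → Fin 2) (hπ : Measurable π) {t : ℕ}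
    (h : Fin t → ℝ) : policyStats π h = stats (Alg.ofPolicy π hπ) h := by
  induction t with
  | zero => rfl
  | succ t ih =>
    funext i
    have hprev := congrFun (ih (Fin.init h)) i
    simp only [stats, Prod.ext_iff] at hprev
    by_cases harm : π (policyStats π (Fin.init h)) = i
    · ext <;> simp [policyStats, stats, pulls, rewardSum, Alg.ofPolicy, harm, hprev]
    · ext <;>
        simp [policyStats, stats, pulls, rewardSum, Alg.ofPolicy, harm, Ne.symm harm, hprev]

/-- The deviation of the sum of `2 ^ k` rewards of the first arm at which the hypothesis that its
mean is `0` is rejected. -/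
noncomputable def rejectionThreshold (k : ℕ) : ℝ := √(6 * 2 ^ k * Real.log (k + 1))

/-- The second arm is to be played at stage `k`: the first arm has been played `2 ^ k` times and
its rewards reject mean `0`, while the rewards of the second arm do not reject mean `0`. -/
def TriggersSecondArm (k : ℕ) (s : Stats) : Prop :=
  (s 0).1 = 2 ^ k ∧ (s 0).2 ≤ -rejectionThreshold k ∧
    -(((s 1).1 : ℝ) / 2 + 4 * (k + 1)) ≤ (s 1).2

open Classical in
/-- The policy playing the first arm except when the second one is triggered at some stage. -/
noncomputable def dyadicPolicy (s : Stats) : Fin 2 := if ∃ k, TriggersSecondArm k s then 1 else 0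

lemma measurable_dyadicPolicy : Measurable dyadicPolicy := by
  have hpulls (i : Fin 2) : Measurable fun s : Stats => (s i).1 :=
    measurable_fst.comp (measurable_pi_apply i)
  have hsum (i : Fin 2) : Measurable fun s : Stats => (s i).2 :=
    measurable_snd.comp (measurable_pi_apply i)
  have hpulls_real (i : Fin 2) : Measurable fun s : Stats => ((s i).1 : ℝ) :=
    measurable_from_nat.comp (hpulls i)
  have htrigger (k : ℕ) : MeasurableSet {s | TriggersSecondArm k s} :=
    (measurableSet_eq_fun (hpulls 0) measurable_const).inter <|
      (measurableSet_le (hsum 0) measurable_const).inter <|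
        measurableSet_le (((hpulls_real 1).div_const 2).add_const _).neg (hsum 1)
  have hexists : MeasurableSet {s | ∃ k, TriggersSecondArm k s} := by
    simpa only [Set.ofPred_exists] using MeasurableSet.iUnion htrigger
  exact Measurable.ite hexists measurable_const measurable_const

/-- The algorithm testing the mean of the first arm each time its number of plays is a power of
two. -/
noncomputable def dyadicAlg : Alg := Alg.ofPolicy dyadicPolicy measurable_dyadicPolicy

lemma dyadicAlg_choose_eq_one_iff {t : ℕ} {h : Fin t → ℝ} :
    dyadicAlg.choose t h = 1 ↔ ∃ k, TriggersSecondArm k (stats dyadicAlg h) := by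
  change dyadicPolicy (policyStats dyadicPolicy h) = 1 ↔ _
  rw [policyStats_eq_stats_ofPolicy _ measurable_dyadicPolicy, dyadicPolicy, dyadicAlg]
  simp

lemma rejectionThreshold_nonneg (k : ℕ) : 0 ≤ rejectionThreshold k := Real.sqrt_nonneg _

lemma rejectionThreshold_sq (k : ℕ) :
    rejectionThreshold k ^ 2 = 6 * 2 ^ k * Real.log (k + 1) :=
  Real.sq_sqrt <| mul_nonneg (by positivity) <| Real.log_nonneg (by simp)

end DyadicTest

section RegretAtZero

variable {P : ℝ → Measure Traj} {alg : Alg} {n k : ℕ}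

lemma expRegret_muAmb_zero (alg : Alg) (P : ℝ → Measure Traj) (n : ℕ) :
    expRegret muAmb alg P 0 n = ∫ ω, (pulls alg 1 (hist n ω) : ℝ) ∂(P 0) := by
  simp [expRegret, regret_eq_sum_gap_mul_pulls, muAmb]

lemma TriggersSecondArm.le_tiltExponent_zero {t : ℕ} {h : Fin t → ℝ}
    (hk : TriggersSecondArm k (stats alg h)) :
    3 * Real.log (k + 1) ≤ tiltExponent alg 0 0 (-(rejectionThreshold k / 2 ^ k)) h := by
  obtain ⟨hpulls, hsum, -⟩ := hk
  simp only [stats] at hpulls hsum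
  have hlog : rejectionThreshold k / 2 ^ k * rejectionThreshold k = 6 * Real.log (k + 1) := by
    rw [div_mul_eq_mul_div, ← sq, rejectionThreshold_sq]; field_simp
  have hquad : (rejectionThreshold k / 2 ^ k) ^ 2 * 2 ^ k = 6 * Real.log (k + 1) := by
    rw [div_pow, rejectionThreshold_sq]; field_simp
  have hmul := mul_le_mul_of_nonneg_left hsum
    (div_nonneg (rejectionThreshold_nonneg k) (by positivity : (0 : ℝ) ≤ 2 ^ k))
  simp only [tiltExponent, hpulls]
  push_cast
  linarith

lemma TriggersSecondArm.le_tiltExponent_one {t : ℕ} {h : Fin t → ℝ}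
    (hk : TriggersSecondArm k (stats alg h)) :
    (pulls alg 1 h : ℝ) / 8 - 2 * (k + 1) ≤ tiltExponent alg 1 (-1) (1 / 2) h := by
  obtain ⟨-, -, hsum⟩ := hk
  simp only [stats] at hsum
  unfold tiltExponent
  linarith

lemma IsEnv.measureReal_triggersSecondArm_le (hP : IsEnv muAmb alg P) (k m : ℕ) :
    (P 0).real {ω | ∃ t, TriggersSecondArm k (stats alg (hist t ω)) ∧
      pulls alg 1 (hist t ω) = m} ≤
      min (((k : ℝ) + 1) ^ 3)⁻¹ (Real.exp (-((m : ℝ) / 8 - 2 * (k + 1)))) := by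
  have := hP.1 0
  have hmean : muAmb 0 0 = 0 ∧ muAmb 1 0 = -1 := by simp [muAmb]
  refine le_min ?_ ?_
  · have htail := hP.measureReal_exists_le_tiltExponent_le 0 0
      (-(rejectionThreshold k / 2 ^ k)) (3 * Real.log (k + 1))
    have hexp : Real.exp (-(3 * Real.log (k + 1))) = (((k : ℝ) + 1) ^ 3)⁻¹ := by
      rw [Real.exp_neg, show 3 * Real.log ((k : ℝ) + 1) = Real.log (((k : ℝ) + 1) ^ 3) by
        rw [Real.log_pow]; norm_num, Real.exp_log (by positivity)]
    rw [hmean.1, hexp] at htail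
    refine (measureReal_mono ?_).trans htail
    exact fun ω ⟨t, htrigger, _⟩ => ⟨t, htrigger.le_tiltExponent_zero⟩
  · have htail := hP.measureReal_exists_le_tiltExponent_le 0 1 (1 / 2)
      ((m : ℝ) / 8 - 2 * (k + 1))
    rw [hmean.2] at htail
    refine (measureReal_mono ?_).trans htail
    exact fun ω ⟨t, htrigger, hm⟩ => ⟨t, hm ▸ htrigger.le_tiltExponent_one⟩

lemma exists_triggersSecondArm_of_lt_pulls {m : ℕ} {ω : Traj}
    (h : m < pulls dyadicAlg 1 (hist n ω)) :
    ∃ k < n, ∃ t, TriggersSecondArm k (stats dyadicAlg (hist t ω)) ∧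
      pulls dyadicAlg 1 (hist t ω) = m := by
  obtain ⟨t, ht, hm, harm⟩ := exists_pulls_eq_and_choose_eq h
  obtain ⟨k, htrigger⟩ := dyadicAlg_choose_eq_one_iff.1 harm
  have hk : 2 ^ k ≤ t := htrigger.1 ▸ pulls_hist_le dyadicAlg 0 t ω
  exact ⟨k, Nat.lt_two_pow_self.trans_le (hk.trans ht.le), t, htrigger, hm⟩

lemma min_inv_pow_exp_le (k : ℕ) (x : ℝ) :
    min (((k : ℝ) + 1) ^ 3)⁻¹ (Real.exp (-(x / 8 - 2 * (k + 1)))) ≤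
      (if x ≤ 32 * ((k : ℝ) + 1) then (((k : ℝ) + 1) ^ 3)⁻¹ else 0) +
        Real.exp (-((k : ℝ) + 1)) * Real.exp (-(1 / 32 * x)) := by
  split_ifs with hx
  · exact (min_le_left _ _).trans (le_add_of_nonneg_right (by positivity))
  · rw [zero_add, ← Real.exp_add]
    exact (min_le_right _ _).trans (Real.exp_le_exp.2 (by linarith))

lemma sum_two_pow_mul_min_le (k n : ℕ) :
    ∑ j ∈ Finset.range n, 2 ^ j *
        min (((k : ℝ) + 1) ^ 3)⁻¹ (Real.exp (-((2 : ℝ) ^ j / 8 - 2 * (k + 1)))) ≤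
      64 * (((k : ℝ) + 1) ^ 2)⁻¹ + 64 * Real.exp (-((k : ℝ) + 1)) := by
  have hshort := sum_ite_mul_two_pow_le zero_le_one (by positivity : 0 ≤ 32 * ((k : ℝ) + 1)) n
  have hlong := sum_mul_exp_neg_mul_two_pow_le (by norm_num : (0 : ℝ) ≤ 1 / 32) n
  simp only [one_mul] at hshort
  calc _ ≤ ∑ j ∈ Finset.range n,
        ((((k : ℝ) + 1) ^ 3)⁻¹ * (if (2 : ℝ) ^ j ≤ 32 * ((k : ℝ) + 1) then 2 ^ j else 0) +
          32 * Real.exp (-((k : ℝ) + 1)) *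
            (1 / 32 * 2 ^ j * Real.exp (-(1 / 32 * 2 ^ j)))) := by
        refine Finset.sum_le_sum fun j _ => ?_
        refine (mul_le_mul_of_nonneg_left (min_inv_pow_exp_le k _) (by positivity)).trans_eq ?_
        split_ifs <;> ring
    _ ≤ (((k : ℝ) + 1) ^ 3)⁻¹ * (2 * (32 * ((k : ℝ) + 1))) +
          32 * Real.exp (-((k : ℝ) + 1)) * 2 := by
        rw [Finset.sum_add_distrib, ← Finset.mul_sum, ← Finset.mul_sum]
        gcongr
    _ = _ := by field_simp; ring

lemma IsEnv.measureReal_two_pow_lt_pulls_one_le (hP : IsEnv muAmb dyadicAlg P) (n j : ℕ) :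
    (P 0).real {ω | 2 ^ j < pulls dyadicAlg 1 (hist n ω)} ≤
      ∑ k ∈ Finset.range n,
        min (((k : ℝ) + 1) ^ 3)⁻¹ (Real.exp (-((2 : ℝ) ^ j / 8 - 2 * (k + 1)))) := by
  have := hP.1 0
  calc (P 0).real {ω | 2 ^ j < pulls dyadicAlg 1 (hist n ω)}
      ≤ (P 0).real (⋃ k ∈ Finset.range n,
          {ω | ∃ t, TriggersSecondArm k (stats dyadicAlg (hist t ω)) ∧
            pulls dyadicAlg 1 (hist t ω) = 2 ^ j}) :=
        measureReal_mono (fun ω hω => by simpa using exists_triggersSecondArm_of_lt_pulls hω)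
          (measure_ne_top _ _)
    _ ≤ _ := measureReal_biUnion_finset_le _ _
    _ ≤ _ := Finset.sum_le_sum fun k _ => by
        simpa using hP.measureReal_triggersSecondArm_le k (2 ^ j)

lemma IsEnv.expRegret_dyadicAlg_zero_le (hP : IsEnv muAmb dyadicAlg P) (n : ℕ) :
    expRegret muAmb dyadicAlg P 0 n ≤ 193 := by
  have := hP.1 0
  calc expRegret muAmb dyadicAlg P 0 n
      ≤ 1 + ∑ j ∈ Finset.range n,
          2 ^ j * (P 0).real {ω | 2 ^ j < pulls dyadicAlg 1 (hist n ω)} := by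
        rw [expRegret_muAmb_zero]
        exact integral_natCast_le_one_add_sum_two_pow
          ((measurable_pulls _ _ n).comp (measurable_hist n)) (pulls_hist_le_two_pow _ _ n)
    _ ≤ 1 + ∑ k ∈ Finset.range n, ∑ j ∈ Finset.range n, 2 ^ j *
          min (((k : ℝ) + 1) ^ 3)⁻¹ (Real.exp (-((2 : ℝ) ^ j / 8 - 2 * (k + 1)))) := by
        rw [Finset.sum_comm]
        simp only [← Finset.mul_sum]
        gcongr with j
        exact hP.measureReal_two_pow_lt_pulls_one_le n j
    _ ≤ 1 + ∑ k ∈ Finset.range n,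
          (64 * (((k : ℝ) + 1) ^ 2)⁻¹ + 64 * Real.exp (-((k : ℝ) + 1))) := by
        gcongr with k
        exact sum_two_pow_mul_min_le k n
    _ ≤ 193 := by
        rw [Finset.sum_add_distrib, ← Finset.mul_sum, ← Finset.mul_sum]
        linarith [sum_inv_succ_sq_le_two n, sum_exp_neg_succ_le_one n]

end RegretAtZero

section RegretAtPos

variable {P : ℝ → Measure Traj} {θ : ℝ} {n k : ℕ}

lemma expRegret_muAmb_of_pos (alg : Alg) (P : ℝ → Measure Traj) (hθ : 0 < θ) (n : ℕ) :
    expRegret muAmb alg P θ n = θ * ∫ ω, (pulls alg 0 (hist n ω) : ℝ) ∂(P θ) := by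
  simp [expRegret, regret_eq_sum_gap_mul_pulls, muAmb, hθ, hθ.le, hθ.not_ge, integral_const_mul]

lemma two_mul_rejectionThreshold_le (hθ : 0 ≤ θ) (h : 24 * Real.log (k + 1) ≤ θ ^ 2 * 2 ^ k) :
    2 * rejectionThreshold k ≤ θ * 2 ^ k := by
  refine le_of_sq_le_sq ?_ (by positivity)
  calc (2 * rejectionThreshold k) ^ 2 = 24 * Real.log (k + 1) * 2 ^ k := by
        rw [mul_pow, rejectionThreshold_sq]; ring
    _ ≤ θ ^ 2 * 2 ^ k * 2 ^ k := by gcongr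
    _ = (θ * 2 ^ k) ^ 2 := by ring

lemma exists_le_tiltExponent_of_two_pow_lt_pulls {ω : Traj} (hθ : 0 ≤ θ)
    (hk : 24 * Real.log (k + 1) ≤ θ ^ 2 * 2 ^ k) (h : 2 ^ k < pulls dyadicAlg 0 (hist n ω)) :
    (∃ t, θ ^ 2 * 2 ^ k / 8 ≤ tiltExponent dyadicAlg 0 (-θ) (θ / 2) (hist t ω)) ∨
      ∃ t, 2 * ((k : ℝ) + 1) ≤ tiltExponent dyadicAlg 1 0 (-(1 / 2)) (hist t ω) := by
  obtain ⟨t, -, hpulls, harm⟩ := exists_pulls_eq_and_choose_eq h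
  have hnot : ¬ TriggersSecondArm k (stats dyadicAlg (hist t ω)) := fun htrigger =>
    zero_ne_one (harm.symm.trans (dyadicAlg_choose_eq_one_iff.2 ⟨k, htrigger⟩))
  by_cases hsum : rewardSum dyadicAlg 0 (hist t ω) ≤ -rejectionThreshold k
  · have hlow : rewardSum dyadicAlg 1 (hist t ω) <
        -((pulls dyadicAlg 1 (hist t ω) : ℝ) / 2 + 4 * (k + 1)) :=
      not_le.1 fun hle => hnot ⟨hpulls, hsum, hle⟩
    refine Or.inr ⟨t, ?_⟩
    unfold tiltExponent
    linarith [Nat.cast_nonneg (α := ℝ) (pulls dyadicAlg 1 (hist t ω))]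
  · have hdev : θ * 2 ^ k / 2 ≤ rewardSum dyadicAlg 0 (hist t ω) + θ * 2 ^ k := by
      linarith [two_mul_rejectionThreshold_le hθ hk]
    refine Or.inl ⟨t, ?_⟩
    simp only [tiltExponent, hpulls]
    push_cast
    linarith [mul_le_mul_of_nonneg_left hdev (div_nonneg hθ zero_le_two)]

lemma IsEnv.measureReal_two_pow_lt_pulls_zero_le (hP : IsEnv muAmb dyadicAlg P) (hθ : 0 < θ)
    (n : ℕ) (hk : 24 * Real.log (k + 1) ≤ θ ^ 2 * 2 ^ k) :
    (P θ).real {ω | 2 ^ k < pulls dyadicAlg 0 (hist n ω)} ≤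
      Real.exp (-(θ ^ 2 * 2 ^ k / 8)) + Real.exp (-(2 * ((k : ℝ) + 1))) := by
  have := hP.1 θ
  have hmean : muAmb 0 θ = -θ ∧ muAmb 1 θ = 0 := by simp [muAmb, hθ, hθ.not_ge]
  have hfirst := hP.measureReal_exists_le_tiltExponent_le θ 0 (θ / 2) (θ ^ 2 * 2 ^ k / 8)
  have hsecond := hP.measureReal_exists_le_tiltExponent_le θ 1 (-(1 / 2)) (2 * ((k : ℝ) + 1))
  rw [hmean.1] at hfirst
  rw [hmean.2] at hsecond
  calc _ ≤ _ := measureReal_mono fun ω hω =>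
        exists_le_tiltExponent_of_two_pow_lt_pulls hθ.le hk hω
    _ ≤ _ := measureReal_union_le _ _
    _ ≤ _ := add_le_add hfirst hsecond

lemma IsEnv.sq_mul_two_pow_mul_measureReal_le (hP : IsEnv muAmb dyadicAlg P) (hθ : 0 < θ)
    (hθ1 : θ ≤ 1) (hn : 16 ≤ n) :
    θ ^ 2 * 2 ^ k * (P θ).real {ω | 2 ^ k < pulls dyadicAlg 0 (hist n ω)} ≤
      (if θ ^ 2 * 2 ^ k ≤ 72 * Real.log (Real.log n) then θ ^ 2 * 2 ^ k else 0) +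
        8 * (θ ^ 2 / 8 * 2 ^ k * Real.exp (-(θ ^ 2 / 8 * 2 ^ k))) +
        2 ^ k * Real.exp (-(2 * ((k : ℝ) + 1))) := by
  have := hP.1 θ
  set p := (P θ).real {ω | 2 ^ k < pulls dyadicAlg 0 (hist n ω)} with hp
  have hle_one : θ ^ 2 * 2 ^ k * p ≤ θ ^ 2 * 2 ^ k :=
    mul_le_of_le_one_right (by positivity) measureReal_le_one
  split_ifs with hsmall
  · rw [add_assoc]
    exact hle_one.trans (le_add_of_nonneg_right (by positivity))
  rcases lt_or_ge n (2 ^ k) with hnk | hnk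
  · have hempty : p = 0 := by
      have : {ω | 2 ^ k < pulls dyadicAlg 0 (hist n ω)} = ∅ :=
        Set.eq_empty_of_forall_notMem fun ω hω =>
          (hω.trans_le (pulls_hist_le dyadicAlg 0 n ω)).not_gt hnk
      rw [hp, this, measureReal_empty]
    rw [hempty, mul_zero]
    positivity
  · have hlog := log_natCast_add_one_le_three_mul_log_log hn hnk
    have htail := hP.measureReal_two_pow_lt_pulls_zero_le (k := k) hθ n (by linarith)
    have hsq : θ ^ 2 * 2 ^ k ≤ 2 ^ k :=
      mul_le_of_le_one_left (by positivity) (pow_le_one₀ hθ.le hθ1)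
    calc θ ^ 2 * 2 ^ k * p
        ≤ θ ^ 2 * 2 ^ k * Real.exp (-(θ ^ 2 * 2 ^ k / 8)) +
          θ ^ 2 * 2 ^ k * Real.exp (-(2 * ((k : ℝ) + 1))) := by
          rw [← mul_add]; gcongr
      _ ≤ θ ^ 2 * 2 ^ k * Real.exp (-(θ ^ 2 * 2 ^ k / 8)) +
          2 ^ k * Real.exp (-(2 * ((k : ℝ) + 1))) := by gcongr
      _ = _ := by ring_nf

lemma IsEnv.mul_expRegret_dyadicAlg_le (hP : IsEnv muAmb dyadicAlg P) (hθ : 0 < θ) (hθ1 : θ ≤ 1)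
    (hn : 16 ≤ n) :
    θ * expRegret muAmb dyadicAlg P θ n ≤ 18 + 144 * Real.log (Real.log n) := by
  have := hP.1 θ
  have hpulls : ∫ ω, (pulls dyadicAlg 0 (hist n ω) : ℝ) ∂(P θ) ≤
      1 + ∑ k ∈ Finset.range n,
        2 ^ k * (P θ).real {ω | 2 ^ k < pulls dyadicAlg 0 (hist n ω)} :=
    integral_natCast_le_one_add_sum_two_pow
      ((measurable_pulls _ _ n).comp (measurable_hist n)) (pulls_hist_le_two_pow _ _ n)
  calc θ * expRegret muAmb dyadicAlg P θ n
      = θ ^ 2 * ∫ ω, (pulls dyadicAlg 0 (hist n ω) : ℝ) ∂(P θ) := by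
        rw [expRegret_muAmb_of_pos _ _ hθ]; ring
    _ ≤ θ ^ 2 + ∑ k ∈ Finset.range n,
          θ ^ 2 * 2 ^ k * (P θ).real {ω | 2 ^ k < pulls dyadicAlg 0 (hist n ω)} := by
        simpa only [mul_add, mul_one, Finset.mul_sum, mul_assoc] using
          mul_le_mul_of_nonneg_left hpulls (sq_nonneg θ)
    _ ≤ 1 + (2 * (72 * Real.log (Real.log n)) + 8 * 2 + 1) := by
        refine add_le_add (pow_le_one₀ hθ.le hθ1) ?_
        refine (Finset.sum_le_sum fun k _ =>
          hP.sq_mul_two_pow_mul_measureReal_le hθ hθ1 hn).trans ?_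
        rw [Finset.sum_add_distrib, Finset.sum_add_distrib, ← Finset.mul_sum]
        gcongr
        · exact sum_ite_mul_two_pow_le (sq_nonneg θ) (by linarith [one_le_log_log hn]) n
        · exact sum_mul_exp_neg_mul_two_pow_le (by positivity) n
        · exact sum_two_pow_mul_exp_le_one n
    _ = 18 + 144 * Real.log (Real.log n) := by ring

end RegretAtPos

/-- **Remark after Theorem 8.** For the two-armed structured bandit with `Θ = [−1,1]`,
`μ₁(θ) = −θ·1{θ > 0}`, `μ₂(θ) = −1{θ ≤ 0}` and unit-variance normal rewards, there is an
algorithm such that `max{E₀ R_n(0), sup_{θ > 0} θ·E_θ R_n(θ)} ∈ O(log log n)` (so in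
particular this quantity is not `Ω(log n)`). -/
theorem loglog_worst_case_ambiguous_example :
    ∃ alg : Alg, ∀ P : ℝ → Measure Traj, IsEnv muAmb alg P →
      ∃ C > (0 : ℝ), ∃ N : ℕ, ∀ n : ℕ, N ≤ n →
        expRegret muAmb alg P 0 n ≤ C * Real.log (Real.log n) ∧
        ∀ θ : ℝ, 0 < θ → θ ≤ 1 →
          θ * expRegret muAmb alg P θ n ≤ C * Real.log (Real.log n) := by
  refine ⟨dyadicAlg, fun P hP => ⟨200, by norm_num, 16, fun n hn => ?_⟩⟩
  have hll := one_le_log_log hn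
  refine ⟨(hP.expRegret_dyadicAlg_zero_le n).trans (by linarith), fun θ hθ hθ1 => ?_⟩
  exact (hP.mul_expRegret_dyadicAlg_le hθ hθ1 hn).trans (by linarith)

end TwoArmedBandit
end
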